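/- Let G be a finite group, H ≤ G a subgroup of index n, l = 3, G̃ = C₃^n ⋊ G, H̃ = C₃^n ⋊ H, and χ: H̃ → C₃ the projection character (ζ₁,…,ζₙ, h) ↦ ζ₁, with kernel U = ker(χ). Let H̃' ≤ G̃ be a subgroup and χ': H̃' → ℂ^× a character whose image is cyclic of order 3, with kernel U' = ker(χ'). If Ind_{H̃}^{G̃}(1) ≅ Ind_{H̃'}^{G̃}(1) and Ind_{U}^{G̃}(1) ≅ Ind_{U'}^{G̃}(1), then either Ind_{H̃}^{G̃}(χ) ≅ Ind_{H̃'}^{G̃}(χ') or Ind_{H̃}^{G̃}(χ) ≅ Ind_{H̃'}^{G̃}(χ̄'), where χ̄' is the complex conjugate character of χ'. -/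

import Mathlib

noncomputable section

/-- The carrier of the representation of `G` induced from a one-dimensional character
`χ : H → ℂˣ` of a subgroup `H ≤ G`: the space of functions `f : G → ℂ` with
`f (h * g) = χ h * f g`. -/
def IndCarrier {G : Type} [Group G] (H : Subgroup G) (χ : H →* ℂˣ) : Submodule ℂ (G → ℂ) where
  carrier := {f | ∀ (h : H) (g : G), f (↑h * g) = (χ h : ℂ) * f g}
  add_mem' := fun ha hb h g => by
    simp only [Set.mem_setOf_eq] at *
    simp [ha h g, hb h g, mul_add]
  zero_mem' := fun h g => by simp
  smul_mem' := fun c a ha h g => by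
    simp only [Set.mem_setOf_eq] at *
    simp [ha h g]
    ring

/-- The representation of `G` induced from the one-dimensional character `χ` of `H ≤ G`,
realized on `IndCarrier H χ` by right translation. -/
def ind {G : Type} [Group G] (H : Subgroup G) (χ : H →* ℂˣ) :
    Representation ℂ G (IndCarrier H χ) where
  toFun g :=
    { toFun := fun f => ⟨fun x => f.1 (x * g), fun h x => by
        simpa [mul_assoc] using f.2 h (x * g)⟩
      map_add' := fun f₁ f₂ => rfl
      map_smul' := fun c f => rfl }
  map_one' := by
    ext f x
    simp
  map_mul' g₁ g₂ := by
    ext f x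
    simp [mul_assoc]

/-- Two representations are equivalent if there is a `ℂ`-linear equivalence intertwining the
two actions. -/
def RepEquiv {G V W : Type} [Group G] [AddCommGroup V] [Module ℂ V] [AddCommGroup W]
    [Module ℂ W] (ρ : Representation ℂ G V) (τ : Representation ℂ G W) : Prop :=
  ∃ e : V ≃ₗ[ℂ] W, ∀ (g : G) (v : V), e (ρ g v) = τ g (e v)

/-- The direct sum of two representations. -/
def prodRep {G V W : Type} [Group G] [AddCommGroup V] [Module ℂ V] [AddCommGroup W]
    [Module ℂ W] (ρ : Representation ℂ G V) (τ : Representation ℂ G W) :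
    Representation ℂ G (V × W) where
  toFun g := (ρ g).prodMap (τ g)
  map_one' := by ext <;> simp
  map_mul' g₁ g₂ := by ext <;> simp

/-- A representation is irreducible if the space is nonzero and the only invariant submodules
are `⊥` and `⊤`. -/
def IsIrreducibleRep {G V : Type} [Group G] [AddCommGroup V] [Module ℂ V]
    (ρ : Representation ℂ G V) : Prop :=
  Nontrivial V ∧ ∀ p : Submodule ℂ V, (∀ g : G, ∀ v ∈ p, ρ g v ∈ p) → p = ⊥ ∨ p = ⊤

/-- The complex conjugate of a one-dimensional character. -/
def conjChar {H : Type} [Group H] (χ : H →* ℂˣ) : H →* ℂˣ :=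
  (Units.map (starRingEnd ℂ).toMonoidHom).comp χ
/-- `C_l`: the group of `l`-th roots of unity in `ℂˣ`. -/
abbrev rootsC (l : ℕ) : Subgroup ℂˣ := rootsOfUnity l ℂ

variable (G : Type) [Group G] (H : Subgroup G) (l : ℕ)

/-- The automorphism of `C_l^{G/H}` permuting the coordinates according to the left
translation action of `g` on the cosets `G/H`. -/
def permAut (g : G) : ((G ⧸ H) → rootsC l) ≃* ((G ⧸ H) → rootsC l) where
  toFun f x := f (g⁻¹ • x)
  invFun f x := f (g • x)
  left_inv f := funext fun x => by simp
  right_inv f := funext fun x => by simp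
  map_mul' f₁ f₂ := rfl

/-- The action of `G` on `C_l^{G/H}` by permuting the coordinates as `G` permutes the left
cosets `G/H`. -/
def permHom : G →* MulAut ((G ⧸ H) → rootsC l) where
  toFun := permAut G H l
  map_one' := MulEquiv.ext fun f => funext fun x => by
    show f ((1 : G)⁻¹ • x) = f x
    rw [inv_one, one_smul]
  map_mul' g₁ g₂ := MulEquiv.ext fun f => funext fun x => by
    show f ((g₁ * g₂)⁻¹ • x) = f (g₂⁻¹ • g₁⁻¹ • x)
    rw [mul_inv_rev, mul_smul]

/-- `G̃ = C_l^{G/H} ⋊ G`. -/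
abbrev Gtil := ((G ⧸ H) → rootsC l) ⋊[permHom G H l] G

/-- `H̃ = C_l^{G/H} ⋊ H`, as a subgroup of `G̃`: the elements whose `G`-component lies
in `H`. -/
def Htil : Subgroup (Gtil G H l) := Subgroup.comap SemidirectProduct.rightHom H

/-- The character `χ : H̃ → C_l ⊆ ℂˣ` given by projection onto the coordinate indexed by the
trivial coset `H ∈ G/H`. -/
def chiTil : Htil G H l →* ℂˣ where
  toFun x := ((x.1.left ((1 : G) : G ⧸ H) : ℂˣ))
  map_one' := by simp
  map_mul' x y := by
    have hxy : (x * y).1.left = x.1.left * permHom G H l x.1.right y.1.left :=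
      SemidirectProduct.mul_left x.1 y.1
    have hmem : x.1.right ∈ H := x.2
    have hco : (x.1.right)⁻¹ • ((1 : G) : G ⧸ H) = ((1 : G) : G ⧸ H) := by
      show ((x.1.right⁻¹ * 1 : G) : G ⧸ H) = ((1 : G) : G ⧸ H)
      rw [mul_one]
      exact (QuotientGroup.eq).2 (by simpa using hmem)
    calc ((x * y).1.left ((1 : G) : G ⧸ H) : ℂˣ)
        = ((x.1.left ((1 : G) : G ⧸ H) * y.1.left ((x.1.right)⁻¹ • ((1 : G) : G ⧸ H)) : rootsC l) : ℂˣ) := by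
          rw [hxy]; rfl
      _ = (x.1.left ((1 : G) : G ⧸ H) : ℂˣ) * (y.1.left ((1 : G) : G ⧸ H) : ℂˣ) := by
          rw [hco]; push_cast; rfl

/-- Projection of functions on the group to the induced space. -/
def projInd {E : Type} [Group E] [Finite E] (K : Subgroup E) (ψ : K →* ℂˣ) :
    (E → ℂ) →ₗ[ℂ] IndCarrier K ψ :=
  letI : Fintype K := Fintype.ofFinite K
  { toFun := fun f => ⟨fun x => ∑ h : K, ((ψ h)⁻¹ : ℂˣ) * f (h * x), by
      intro k x
      rw [Finset.mul_sum]
      refine Fintype.sum_equiv (Equiv.mulRight k) _ _ fun h => ?_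
      have h1 : (ψ k : ℂ) * ((ψ (h * k))⁻¹ : ℂˣ) = ((ψ h)⁻¹ : ℂˣ) := by
        rw [← Units.val_mul, map_mul]
        congr 1
        simp
      simp only [Equiv.coe_mulRight]
      rw [← mul_assoc (ψ k : ℂ), h1]
      simp [mul_assoc]⟩
    map_add' := fun f g => by
      ext x
      simp [mul_add, Finset.sum_add_distrib]
    map_smul' := fun c f => by
      ext x
      simp only [Pi.smul_apply, smul_eq_mul, RingHom.id_apply, Submodule.coe_smul,
        Finset.mul_sum]
      exact Finset.sum_congr rfl fun _ _ => by ring }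

theorem projInd_apply {E : Type} [Group E] [Finite E] (K : Subgroup E)
    [Fintype K] (ψ : K →* ℂˣ) (f : E → ℂ) (x : E) :
    (projInd K ψ f).1 x = ∑ h : K, ((ψ h)⁻¹ : ℂˣ) * f (h * x) := by
  simp only [projInd]
  refine Finset.sum_congr ?_ fun _ _ => rfl
  ext; simp

/-- Equivariant function with unit values. -/
theorem exists_equivariant {E : Type} [Group E] (K : Subgroup E) (ψ : K →* ℂˣ) :
    ∃ φ : E → ℂˣ, ∀ (h : K) (g : E), φ (h * g) = ψ h * φ g := by
  obtain ⟨S, hS, -⟩ := K.exists_isComplement_right 1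
  refine ⟨fun g => ψ (hS.equiv g).1, fun h g => ?_⟩
  show ψ (hS.equiv (h * g)).1 = ψ h * ψ (hS.equiv g).1
  rw [← map_mul]
  congr 1
  rw [hS.equiv_mul_left h g]

theorem finrank_ind {E : Type} [Group E] (K : Subgroup E) (ψ : K →* ℂˣ) :
    Module.finrank ℂ (IndCarrier K 1) = Module.finrank ℂ (IndCarrier K ψ) := by
  obtain ⟨φ, hφ⟩ := exists_equivariant K ψ
  refine LinearEquiv.finrank_eq
    { toFun := fun f => ⟨fun x => φ x * f.1 x, fun h x => ?_⟩
      invFun := fun f => ⟨fun x => ((φ x)⁻¹ : ℂˣ) * f.1 x, fun h x => ?_⟩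
      map_add' := fun f g => ?_
      map_smul' := fun c f => ?_
      left_inv := fun f => ?_
      right_inv := fun f => ?_ }
  · have := f.2 h x
    show (φ (h * x) : ℂ) * f.1 (h * x) = ψ h * (φ x * f.1 x)
    rw [this, hφ]; simp [mul_assoc]
  · ext x; simp [mul_add]
  · ext x; simp only [Submodule.coe_smul, Pi.smul_apply, smul_eq_mul, RingHom.id_apply]; ring
  · have := f.2 h x
    show (((φ (h * x))⁻¹ : ℂˣ) : ℂ) * f.1 (h * x) = ((1 : K →* ℂˣ) h : ℂ) * (((φ x)⁻¹ : ℂˣ) * f.1 x)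
    rw [this, hφ]
    simp only [mul_inv_rev, Units.val_mul, Units.val_inv_eq_inv_val, MonoidHom.one_apply,
      Units.val_one, one_mul]
    have := (ψ h).ne_zero
    field_simp
  · ext x; simp
  · ext x; simp

/-- Translation criterion: an element supported on one coset generates. -/
theorem span_ind {E : Type} [Group E] [Finite E] (K : Subgroup E) (ψ : K →* ℂˣ)
    {W : Type} [AddCommGroup W] [Module ℂ W] (τ : Representation ℂ E W)
    (T : IndCarrier K ψ →ₗ[ℂ] W) (hT : ∀ g v, T (ind K ψ g v) = τ g (T v))
    (d : IndCarrier K ψ) (x0 : E) (hd0 : d.1 x0 ≠ 0)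
    (hd : ∀ x, x * x0⁻¹ ∉ K → d.1 x = 0) (hTd : T d = 0) : T = 0 := by
  classical
  letI : Fintype E := Fintype.ofFinite E
  have key : ∀ f : IndCarrier K ψ,
      ∑ y : E, f.1 y • ind K ψ (y⁻¹ * x0) d = ((Nat.card K : ℂ) * d.1 x0) • f := by
    intro f
    ext x
    have hterm : ∀ y : E, f.1 y * d.1 (x * (y⁻¹ * x0)) =
        if x * y⁻¹ ∈ K then f.1 x * d.1 x0 else 0 := by
      intro y
      split_ifs with hy
      · have e1 := d.2 ⟨_, hy⟩ x0
        have e2 := f.2 ⟨_, hy⟩ y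
        simp only [inv_mul_cancel_right] at e2
        rw [← mul_assoc, e1, e2]; ring
      · rw [hd, mul_zero]
        simpa [mul_assoc] using hy
    have hcount : (Finset.univ.filter fun y : E => x * y⁻¹ ∈ K).card = Nat.card K := by
      rw [Nat.card_eq_fintype_card, ← Fintype.card_coe]
      refine Fintype.card_congr
        { toFun := fun y => ⟨x * y.1⁻¹, (Finset.mem_filter.1 y.2).2⟩
          invFun := fun k => ⟨k.1⁻¹ * x, by simp⟩
          left_inv := fun y => by simp
          right_inv := fun k => by simp }
    have : (∑ y : E, f.1 y • ind K ψ (y⁻¹ * x0) d : IndCarrier K ψ).1 x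
        = ∑ y : E, f.1 y * d.1 (x * (y⁻¹ * x0)) := by
      rw [AddSubmonoidClass.coe_finset_sum, Finset.sum_apply]
      rfl
    rw [this, Finset.sum_congr rfl fun y _ => hterm y, ← Finset.sum_filter, Finset.sum_const,
      hcount]
    simp only [nsmul_eq_mul, Submodule.coe_smul, Pi.smul_apply, smul_eq_mul]
    ring
  ext f
  have h := congrArg T (key f)
  rw [map_sum, map_smul] at h
  simp only [map_smul, hT, hTd, map_zero, smul_zero, Finset.sum_const_zero] at h
  have hc : ((Nat.card K : ℂ) * d.1 x0) ≠ 0 :=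
    mul_ne_zero (Nat.cast_ne_zero.2 Nat.card_pos.ne') hd0
  exact (smul_eq_zero.1 h.symm).resolve_left hc

/-- A primitive cube root of unity. -/
theorem exists_omega : ∃ w : rootsC 3, ((w : ℂˣ) : ℂ) ≠ 1 := by
  have h := Complex.isPrimitiveRoot_exp 3 (by norm_num)
  obtain ⟨u, hu⟩ := h.isUnit (by norm_num)
  refine ⟨⟨u, ?_⟩, ?_⟩
  · rw [mem_rootsOfUnity']
    rw [hu]; exact h.pow_eq_one
  · simp only [hu]
    exact h.ne_one (by norm_num)

theorem mk_eq_iff_Htil (G : Type) [Group G] (H : Subgroup G) (x x0 : Gtil G H 3) :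
    x.right⁻¹ • ((1 : G) : G ⧸ H) = x0.right⁻¹ • ((1 : G) : G ⧸ H) ↔ x * x0⁻¹ ∈ Htil G H 3 := by
  show ((x.right⁻¹ * 1 : G) : G ⧸ H) = ((x0.right⁻¹ * 1 : G) : G ⧸ H) ↔ _
  rw [QuotientGroup.eq]
  simp [Htil, Subgroup.mem_comap]

theorem inl_conj_mem (G : Type) [Group G] (H : Subgroup G) (x : Gtil G H 3)
    (a : (G ⧸ H) → rootsC 3) :
    x * SemidirectProduct.inl a * x⁻¹ ∈ Htil G H 3 := by
  simp [Htil, Subgroup.mem_comap]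

theorem chi_conj (G : Type) [Group G] (H : Subgroup G) (x : Gtil G H 3)
    (a : (G ⧸ H) → rootsC 3) :
    chiTil G H 3 ⟨_, inl_conj_mem G H x a⟩ = a (x.right⁻¹ • ((1 : G) : G ⧸ H)) := by
  have : x * SemidirectProduct.inl a * x⁻¹ =
      SemidirectProduct.inl (permHom G H 3 x.right a) := by
    ext1
    · simp [SemidirectProduct.mul_left, SemidirectProduct.inv_left, mul_comm]
    · simp
  show (((x * SemidirectProduct.inl a * x⁻¹).left ((1 : G) : G ⧸ H) : rootsC 3) : ℂˣ) = _
  rw [this]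
  rfl

instance finite_Gtil (G : Type) [Group G] [Finite G] (H : Subgroup G) :
    Finite (Gtil G H 3) := by
  haveI : Finite (rootsC 3) := inferInstance
  exact Finite.of_equiv _ (SemidirectProduct.equivProd).symm

/-- The translate of `f` by an element of the base group. -/
theorem ind_inl (G : Type) [Group G] [Finite G] (H : Subgroup G)
    (f : IndCarrier (Htil G H 3) (chiTil G H 3)) (a : (G ⧸ H) → rootsC 3) (x : Gtil G H 3) :
    (ind (Htil G H 3) (chiTil G H 3) (SemidirectProduct.inl a) f).1 x =
      ((a (x.right⁻¹ • ((1 : G) : G ⧸ H)) : ℂˣ) : ℂ) * f.1 x := by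
  have := f.2 ⟨_, inl_conj_mem G H x a⟩ x
  rw [chi_conj] at this
  rw [inv_mul_cancel_right] at this
  exact this

theorem exists_bump (G : Type) [Group G] [Finite G] (H : Subgroup G)
    (f : IndCarrier (Htil G H 3) (chiTil G H 3)) (hf : f ≠ 0) :
    ∃ (a : (G ⧸ H) → rootsC 3) (x0 : Gtil G H 3),
      (ind (Htil G H 3) (chiTil G H 3) (SemidirectProduct.inl a) f - f).1 x0 ≠ 0 ∧
      ∀ x, x * x0⁻¹ ∉ Htil G H 3 →
        (ind (Htil G H 3) (chiTil G H 3) (SemidirectProduct.inl a) f - f).1 x = 0 := by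
  classical
  obtain ⟨w, hw⟩ := exists_omega
  obtain ⟨x0, hx0⟩ : ∃ x0, f.1 x0 ≠ 0 := by
    by_contra! h
    exact hf (Subtype.ext (funext h))
  refine ⟨fun c => if c = x0.right⁻¹ • ((1 : G) : G ⧸ H) then w else 1, x0, ?_, ?_⟩
  · rw [Submodule.coe_sub, Pi.sub_apply, ind_inl, if_pos rfl, ← sub_one_mul]
    exact mul_ne_zero (sub_ne_zero.2 hw) hx0
  · intro x hx
    rw [Submodule.coe_sub, Pi.sub_apply, ind_inl, if_neg]
    · simp
    · rwa [mk_eq_iff_Htil]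

theorem injective_or_zero (G : Type) [Group G] [Finite G] (H : Subgroup G)
    {W : Type} [AddCommGroup W] [Module ℂ W] (τ : Representation ℂ (Gtil G H 3) W)
    (T : IndCarrier (Htil G H 3) (chiTil G H 3) →ₗ[ℂ] W)
    (hT : ∀ g v, T (ind (Htil G H 3) (chiTil G H 3) g v) = τ g (T v)) :
    Function.Injective T ∨ T = 0 := by
  by_cases h : Function.Injective T
  · exact Or.inl h
  right
  rw [injective_iff_map_eq_zero] at h
  push Not at h
  obtain ⟨f, hTf, hf⟩ := h
  obtain ⟨a, x0, h0, h1⟩ := exists_bump G H f hf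
  refine span_ind _ _ τ T hT _ x0 h0 h1 ?_
  rw [map_sub, hT, hTf]; simp

theorem zero_of_trivial (G : Type) [Group G] [Finite G] (H : Subgroup G)
    (T : IndCarrier (Htil G H 3) (chiTil G H 3) →ₗ[ℂ] IndCarrier (Htil G H 3) 1)
    (hT : ∀ g v, T (ind (Htil G H 3) (chiTil G H 3) g v) = ind (Htil G H 3) 1 g (T v)) :
    T = 0 := by
  ext1 f
  by_cases hf : f = 0
  · simp [hf]
  obtain ⟨a, x0, h0, h1⟩ := exists_bump G H f hf
  have : T = 0 := by
    refine span_ind _ _ _ T hT _ x0 h0 h1 ?_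
    rw [map_sub, hT, sub_eq_zero]
    ext x
    have := (T f).2 ⟨_, inl_conj_mem G H x a⟩ x
    rw [inv_mul_cancel_right, MonoidHom.one_apply, Units.val_one, one_mul] at this
    exact this
  rw [this]

theorem projInd_ind {E : Type} [Group E] [Finite E] (K : Subgroup E) (ψ : K →* ℂˣ)
    (L : Subgroup E) (θ : L →* ℂˣ) (g : E) (f : IndCarrier L θ) :
    projInd K ψ (ind L θ g f).1 = ind K ψ g (projInd K ψ f.1) := by
  let _ : Fintype K := Fintype.ofFinite K
  ext x
  show _ = (projInd K ψ f.1).1 (x * g)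
  rw [projInd_apply, projInd_apply]
  refine Finset.sum_congr rfl fun h _ => ?_
  rw [← mul_assoc (h : E) x g]
  rfl

theorem cube_sum (z : ℂˣ) (hz : z ^ 3 = 1) (h1 : z ≠ 1) :
    (1 : ℂ) + ((z⁻¹ : ℂˣ) : ℂ) + (((Units.map (starRingEnd ℂ).toMonoidHom z)⁻¹ : ℂˣ) : ℂ) = 0 := by
  have h3 : (z : ℂ) ^ 3 = 1 := by
    rw [← Units.val_pow_eq_pow_val, hz, Units.val_one]
  have hn : ‖(z : ℂ)‖ = 1 := Complex.norm_eq_one_of_pow_eq_one h3 (by norm_num)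
  have hc : (starRingEnd ℂ) (z : ℂ) = (z : ℂ)⁻¹ := (Complex.inv_eq_conj hn).symm
  have h1' : (z : ℂ) - 1 ≠ 0 := sub_ne_zero.2 fun h => h1 (Units.ext h)
  have h0 := z.ne_zero
  have hs : (1 : ℂ) + z + z ^ 2 = 0 := by
    apply mul_left_cancel₀ h1'
    linear_combination h3
  have hv : ((Units.map (starRingEnd ℂ).toMonoidHom z : ℂˣ) : ℂ) = (z : ℂ)⁻¹ := hc
  rw [Units.val_inv_eq_inv_val, Units.val_inv_eq_inv_val, hv, inv_inv]
  field_simp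
  linear_combination hs

theorem eq_zero_of_proj {E : Type} [Group E] [Finite E] (K : Subgroup E) (ψ : K →* ℂˣ)
    (hψ : Nat.card ψ.range = 3)
    (f : IndCarrier (Subgroup.map K.subtype ψ.ker) (1 : _ →* ℂˣ))
    (h1 : projInd K 1 f.1 = 0) (h2 : projInd K ψ f.1 = 0)
    (h3 : projInd K (conjChar ψ) f.1 = 0) : f = 0 := by
  classical
  let _ : Fintype K := Fintype.ofFinite K
  ext x
  have e1 : (projInd K 1 f.1).1 x = 0 := by rw [h1]; rfl
  have e2 : (projInd K ψ f.1).1 x = 0 := by rw [h2]; rfl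
  have e3 : (projInd K (conjChar ψ) f.1).1 x = 0 := by rw [h3]; rfl
  rw [projInd_apply] at e1 e2 e3
  have e : ∑ h : K, (if h ∈ ψ.ker then 3 * f.1 x else 0) = 0 := by
    have := congrArg₂ (· + ·) (congrArg₂ (· + ·) e1 e2) e3
    simp only [← Finset.sum_add_distrib, add_zero] at this
    refine Eq.trans ?_ this
    refine Finset.sum_congr rfl fun h _ => ?_
    rw [← add_mul, ← add_mul]
    split_ifs with hh
    · have hf := f.2 ⟨h, ⟨h, hh, rfl⟩⟩ x
      simp only [MonoidHom.one_apply, Units.val_one, one_mul] at hf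
      rw [hf]
      rw [MonoidHom.mem_ker] at hh
      simp only [conjChar, MonoidHom.comp_apply, hh, map_one, MonoidHom.one_apply, inv_one,
        Units.val_one]
      ring
    · have hz : ψ h ^ 3 = 1 := by
        have : (⟨ψ h, h, rfl⟩ : ψ.range) ^ 3 = 1 := by rw [← hψ]; exact pow_card_eq_one'
        exact congrArg Subtype.val this
      have := cube_sum (ψ h) hz hh
      simp only [conjChar, MonoidHom.comp_apply, MonoidHom.one_apply, inv_one, Units.val_one]
      rw [this, zero_mul]
  rw [← Finset.sum_filter, Finset.sum_const, nsmul_eq_mul] at e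
  have hne : ((Finset.univ.filter fun h : K => h ∈ ψ.ker).card : ℂ) ≠ 0 := by
    rw [Nat.cast_ne_zero, ← Nat.pos_iff_ne_zero, Finset.card_pos]
    exact ⟨1, by simp⟩
  have := (mul_eq_zero.1 e).resolve_left hne
  simpa using this

theorem repEquiv_of_injective {E V W : Type} [Group E] [AddCommGroup V] [Module ℂ V]
    [AddCommGroup W] [Module ℂ W] [FiniteDimensional ℂ V] [FiniteDimensional ℂ W]
    (ρ : Representation ℂ E V) (τ : Representation ℂ E W)
    (hd : Module.finrank ℂ V = Module.finrank ℂ W) (T : V →ₗ[ℂ] W)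
    (hT : ∀ g v, T (ρ g v) = τ g (T v)) (hi : Function.Injective T) : RepEquiv ρ τ :=
  ⟨LinearEquiv.ofInjectiveOfFinrankEq T hi hd, fun g v => hT g v⟩

/-- Inclusion of the induced space of `χ` into the one of the trivial character of the kernel. -/
def inclKer {E : Type} [Group E] (K : Subgroup E) (ψ : K →* ℂˣ) :
    IndCarrier K ψ →ₗ[ℂ] IndCarrier (Subgroup.map K.subtype ψ.ker) (1 : _ →* ℂˣ) where
  toFun f := ⟨f.1, by
    rintro ⟨_, h, hh, rfl⟩ x
    have := f.2 h x
    rw [SetLike.mem_coe, MonoidHom.mem_ker] at hh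
    rw [hh] at this
    exact this⟩
  map_add' _ _ := rfl
  map_smul' _ _ := rfl

/-- If `Ind_{H̃}^{G̃}(1) ≅ Ind_{H̃'}^{G̃}(1)` and `Ind_{ker χ}^{G̃}(1) ≅ Ind_{ker χ'}^{G̃}(1)`,
then `Ind_{H̃}^{G̃}(χ)` is isomorphic to `Ind_{H̃'}^{G̃}(χ')` or to `Ind_{H̃'}^{G̃}(χ̄')`. -/
theorem stmt_7 (G : Type) [Group G] [Finite G] (H : Subgroup G) (n : ℕ) (hn : H.index = n)
    (H' : Subgroup (Gtil G H 3)) (χ' : H' →* ℂˣ)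
    (hcyc : IsCyclic χ'.range) (hcard : Nat.card χ'.range = 3)
    (h1 : RepEquiv (ind (Htil G H 3) (1 : _ →* ℂˣ)) (ind H' (1 : _ →* ℂˣ)))
    (h2 : RepEquiv
      (ind (Subgroup.map (Htil G H 3).subtype (chiTil G H 3).ker) (1 : _ →* ℂˣ))
      (ind (Subgroup.map H'.subtype χ'.ker) (1 : _ →* ℂˣ))) :
    RepEquiv (ind (Htil G H 3) (chiTil G H 3)) (ind H' χ') ∨
      RepEquiv (ind (Htil G H 3) (chiTil G H 3)) (ind H' (conjChar χ')) := by
  obtain ⟨e1, he1⟩ := h1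
  obtain ⟨e2, he2⟩ := h2
  set P := ind (Htil G H 3) (chiTil G H 3) with hP
  -- intertwiner to any induced representation
  let T : ∀ ψ : H' →* ℂˣ, IndCarrier (Htil G H 3) (chiTil G H 3) →ₗ[ℂ] IndCarrier H' ψ :=
    fun ψ => projInd H' ψ ∘ₗ (Submodule.subtype _) ∘ₗ e2.toLinearMap ∘ₗ
      inclKer (Htil G H 3) (chiTil G H 3)
  have hT : ∀ ψ g v, T ψ (P g v) = ind H' ψ g (T ψ v) := by
    intro ψ g v
    have h := projInd_ind H' ψ _ _ g (e2 (inclKer (Htil G H 3) (chiTil G H 3) v))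
    rw [← he2] at h
    exact h
  have hdim : ∀ ψ : H' →* ℂˣ, Module.finrank ℂ (IndCarrier (Htil G H 3) (chiTil G H 3)) =
      Module.finrank ℂ (IndCarrier H' ψ) := by
    intro ψ
    rw [← finrank_ind, ← finrank_ind H' ψ, e1.finrank_eq]
  have hT1 : T 1 = 0 := by
    have := zero_of_trivial G H (e1.symm.toLinearMap ∘ₗ T 1) (by
      intro g v
      apply e1.injective
      rw [he1]
      simpa using hT 1 g v)
    ext1 v
    have hv := LinearMap.congr_fun this v
    simpa using hv
  rcases injective_or_zero G H _ (T χ') (hT χ') with hi | hz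
  · exact Or.inl (repEquiv_of_injective _ _ (hdim _) _ (hT χ') hi)
  rcases injective_or_zero G H _ (T (conjChar χ')) (hT (conjChar χ')) with hi | hz'
  · exact Or.inr (repEquiv_of_injective _ _ (hdim _) _ (hT (conjChar χ')) hi)
  left
  refine repEquiv_of_injective _ _ (hdim _) _ (hT χ') ?_
  rw [injective_iff_map_eq_zero]
  intro v _
  have hv : e2 (inclKer (Htil G H 3) (chiTil G H 3) v) = 0 :=
    eq_zero_of_proj H' χ' hcard _ (LinearMap.congr_fun hT1 v) (LinearMap.congr_fun hz v)
      (LinearMap.congr_fun hz' v)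
  have hv2 := (map_eq_zero_iff e2 e2.injective).1 hv
  have hv3 : v.1 = 0 := congrArg Subtype.val hv2
  exact Subtype.ext hv3

end
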